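/- Let T be a finite tree on n vertices. Then k(T) = 3 if and only if T belongs to the family 𝒯 of trees obtained either by appending b ≥ 1 pendant vertices to each leaf of a star K_{1,t} with t ≥ 2 leaves, or by appending b ≥ 1 pendant vertices to each leaf of a balanced double star. -/

import Mathlib

/-- The status (transmission index) of a vertex: the sum of distances to all vertices. -/
noncomputable def SimpleGraph.status {V : Type*} [Fintype V] (G : SimpleGraph V) (v : V) : ℕ :=
  ∑ u : V, G.dist v u

/-- `k(G)`: the number of distinct status values among the vertices of `G`. -/
noncomputable def SimpleGraph.numStatusValues {V : Type*} [Fintype V] (G : SimpleGraph V) : ℕ :=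
  (Finset.univ.image G.status).card

/-- The tree obtained from the star `K_{1,t}` by appending `b` pendant vertices to each of
its `t` leaves.  `Sum.inl ()` is the center, `Sum.inr (Sum.inl i)` is the `i`-th leaf of the
star, `Sum.inr (Sum.inr (i, j))` is the `j`-th pendant vertex appended to the `i`-th leaf. -/
def starWithPendants (t b : ℕ) : SimpleGraph (Unit ⊕ (Fin t ⊕ Fin t × Fin b)) :=
  SimpleGraph.fromRel (fun x y =>
    (∃ i : Fin t, x = Sum.inl () ∧ y = Sum.inr (Sum.inl i)) ∨
    (∃ (i : Fin t) (j : Fin b), x = Sum.inr (Sum.inl i) ∧ y = Sum.inr (Sum.inr (i, j))))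

/-- The tree obtained from the balanced double star (two adjacent centers, each with `a`
leaves) by appending `b` pendant vertices to each of its `2a` leaves.  `Sum.inl s` is a
center, `Sum.inr (Sum.inl (s, i))` is the `i`-th leaf at center `s`, and
`Sum.inr (Sum.inr (s, i, j))` is the `j`-th pendant vertex appended to that leaf. -/
def doubleStarWithPendants (a b : ℕ) :
    SimpleGraph (Bool ⊕ (Bool × Fin a ⊕ Bool × Fin a × Fin b)) :=
  SimpleGraph.fromRel (fun x y =>
    (x = Sum.inl false ∧ y = Sum.inl true) ∨
    (∃ (s : Bool) (i : Fin a), x = Sum.inl s ∧ y = Sum.inr (Sum.inl (s, i))) ∨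
    (∃ (s : Bool) (i : Fin a) (j : Fin b),
      x = Sum.inr (Sum.inl (s, i)) ∧ y = Sum.inr (Sum.inr (s, i, j))))


namespace StatusThree

open SimpleGraph Finset

theorem exists_parent {V : Type*} (G : SimpleGraph V) (hT : G.IsTree) {v x : V} (h : v ≠ x) :
    ∃ u, G.Adj v u ∧ G.dist u x + 1 = G.dist v x ∧
      ∀ w, G.Adj v w → G.dist w x + 1 = G.dist v x → w = u := by
  have hc := hT.connected
  obtain ⟨q, hq⟩ := hc.exists_walk_length_eq_dist v x
  cases q with
  | nil => exact absurd rfl h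
  | @cons _ u _ ha q' =>
    have key : ∀ w, G.Adj v w → G.dist w x + 1 = G.dist v x → w = u := by
      intro w hw hd
      obtain ⟨r, hr⟩ := hc.exists_walk_length_eq_dist w x
      have h1 : (Walk.cons hw r).IsPath := by
        apply Walk.isPath_of_length_eq_dist
        rw [Walk.length_cons, hr, hd]
      have h2 : (Walk.cons ha q').IsPath := Walk.isPath_of_length_eq_dist _ hq
      have h3 := (hT.isAcyclic.subsingleton_path _ _).elim ⟨_, h1⟩ ⟨_, h2⟩
      have h4 : Walk.cons hw r = Walk.cons ha q' := congrArg Subtype.val h3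
      have h5 := congrArg Walk.snd h4
      simpa using h5
    refine ⟨u, ha, ?_, key⟩
    rw [Walk.length_cons] at hq
    have h1 := G.dist_le q'
    have h2 := hT.dist_eq_dist_add_one_of_adj x ha
    rw [G.dist_comm (u := x), G.dist_comm (u := x)] at h2
    omega

theorem dist_step {V : Type*} (G : SimpleGraph V) (hT : G.IsTree) {v u : V} (h : G.Adj v u)
    (x : V) : G.dist v x = G.dist u x + 1 ∨ G.dist u x = G.dist v x + 1 := by
  have h2 := hT.dist_eq_dist_add_one_of_adj x h
  rw [G.dist_comm (u := x), G.dist_comm (u := x)] at h2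
  exact h2

theorem term_eq {V : Type*} [Fintype V] (G : SimpleGraph V) (v u : V) :
    (Fintype.card V : ℤ) + G.status v - G.status u =
      ∑ x : V, (1 + (G.dist v x : ℤ) - G.dist u x) := by
  simp [SimpleGraph.status, Finset.sum_add_distrib, Finset.sum_sub_distrib]

theorem term_nonneg {V : Type*} [Fintype V] (G : SimpleGraph V) (hT : G.IsTree) {v u : V}
    (h : G.Adj v u) : 0 ≤ (Fintype.card V : ℤ) + G.status v - G.status u := by
  rw [term_eq]
  refine Finset.sum_nonneg fun x _ => ?_
  have := dist_step G hT h x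
  omega

open Classical in
/-- The fundamental status identity at a vertex of a tree. -/
theorem sum_terms {V : Type*} [Fintype V] (G : SimpleGraph V) (hT : G.IsTree) (v : V) :
    ∑ u : V, (if G.Adj v u then (Fintype.card V : ℤ) + G.status v - G.status u else 0) =
      2 * ((Fintype.card V : ℤ) - 1) := by
  have h1 : ∀ u : V,
      (if G.Adj v u then (Fintype.card V : ℤ) + G.status v - G.status u else 0) =
      ∑ x : V, (if G.Adj v u then (1 + (G.dist v x : ℤ) - G.dist u x) else 0) := by
    intro u
    split_ifs
    · exact term_eq G v u
    · simp
  rw [Finset.sum_congr rfl fun u _ => h1 u, Finset.sum_comm]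
  have h2 : ∀ x : V,
      ∑ u : V, (if G.Adj v u then (1 + (G.dist v x : ℤ) - G.dist u x) else 0) =
      2 - (if x = v then 2 else 0) := by
    intro x
    by_cases hx : x = v
    · subst hx
      simp only [if_true, sub_self]
      refine Finset.sum_eq_zero fun u _ => ?_
      split_ifs with ha
      · have : G.dist u x = 1 := dist_eq_one_iff_adj.mpr ha.symm
        simp [this]
      · rfl
    · obtain ⟨u, hu, hd, huniq⟩ := exists_parent G hT (Ne.symm hx)
      rw [Finset.sum_eq_single u]
      · rw [if_pos hu, if_neg hx]; omega
      · intro w _ hw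
        split_ifs with ha
        · have := dist_step G hT ha x
          have h3 : ¬ (G.dist w x + 1 = G.dist v x) := fun h => hw (huniq w ha h)
          omega
        · rfl
      · simp
  rw [Finset.sum_congr rfl fun x _ => h2 x, Finset.sum_sub_distrib]
  simp
  ring

theorem convex {V : Type*} [Fintype V] (G : SimpleGraph V) (hT : G.IsTree) {v u w : V}
    (hu : G.Adj v u) (hw : G.Adj v w) (huw : u ≠ w) :
    2 * G.status v + 2 ≤ G.status u + G.status w := by
  classical
  have h := sum_terms G hT v
  have h2 : ∑ x ∈ ({u, w} : Finset V),
      (if G.Adj v x then (Fintype.card V : ℤ) + G.status v - G.status x else 0) ≤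
      ∑ x : V, (if G.Adj v x then (Fintype.card V : ℤ) + G.status v - G.status x else 0) := by
    apply Finset.sum_le_sum_of_subset_of_nonneg (Finset.subset_univ _)
    intro x _ _
    split_ifs with ha
    · exact term_nonneg G hT ha
    · exact le_rfl
  rw [Finset.sum_pair huw, if_pos hu, if_pos hw] at h2
  have : ∑ x : V, (if G.Adj v x then (Fintype.card V : ℤ) + G.status v - G.status x else 0) =
      2 * ((Fintype.card V : ℤ) - 1) := by convert h
  omega

/-- Away from a status-minimal vertex the status increases. -/
theorem exists_lower {V : Type*} [Fintype V] (G : SimpleGraph V) (hT : G.IsTree) {c : V}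
    (hc : ∀ v, G.status c ≤ G.status v) (d : ℕ) :
    ∀ v, v ≠ c → G.dist v c = d → ∃ u, G.Adj v u ∧ G.dist u c + 1 = d ∧
      G.status u ≤ G.status v ∧ (u = c ∨ G.status u < G.status v) := by
  induction d with
  | zero =>
    intro v hv hd
    exact absurd (hT.connected.dist_eq_zero_iff.mp hd) hv
  | succ d ih =>
    intro v hv hd
    obtain ⟨u, hu, hud, -⟩ := exists_parent G hT hv
    by_cases huc : u = c
    · subst huc
      exact ⟨u, hu, by omega, hc v, Or.inl rfl⟩
    · obtain ⟨w, hw, hwd, hws, -⟩ := ih u huc (by omega)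
      have hne : v ≠ w := by rintro rfl; omega
      have := convex G hT hu.symm hw hne
      exact ⟨u, hu, by omega, by omega, Or.inr (by omega)⟩

end StatusThree

namespace StatusThree

open SimpleGraph Finset

/-- Abstract adjacency of the level structure. -/
def LevelAdj {V : Type*} (l : V → ℕ) (p : V → V) (u v : V) : Prop :=
  (l u = 0 ∧ l v = 0 ∧ u ≠ v) ∨ (l v = l u + 1 ∧ p v = u) ∨ (l u = l v + 1 ∧ p u = v)

theorem enum_fiber {V : Type*} [Finite V] (P : V → Prop) (Q : V → V → Prop) (a : ℕ)
    (h : ∀ v, P v → Nat.card {w // Q v w} = a) :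
    ∃ e : V → Fin a → V, ∀ v, P v → (∀ i, Q v (e v i)) ∧ Function.Injective (e v) ∧
      ∀ w, Q v w → ∃ i, e v i = w := by
  have : ∀ v, ∃ e : Fin a → V, P v → (∀ i, Q v (e i)) ∧ Function.Injective e ∧
      ∀ w, Q v w → ∃ i, e i = w := by
    intro v
    by_cases hv : P v
    · have hc := h v hv
      let e := (Finite.equivFinOfCardEq hc).symm
      refine ⟨fun i => (e i).1, fun _ => ⟨fun i => (e i).2, ?_, ?_⟩⟩
      · intro i j hij
        exact e.injective (Subtype.ext hij)
      · intro w hw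
        exact ⟨e.symm ⟨w, hw⟩, by simp⟩
    · exact ⟨fun _ => v, fun h => absurd h hv⟩
  choose e he using this
  exact ⟨e, he⟩

/-- Generic enumeration map. -/
def enumMap {V K : Type*} {a b : ℕ} (e0 : K → V) (e1 : V → Fin a → V) (e2 : V → Fin b → V) :
    K ⊕ (K × Fin a ⊕ K × Fin a × Fin b) → V
  | Sum.inl s => e0 s
  | Sum.inr (Sum.inl (s, i)) => e1 (e0 s) i
  | Sum.inr (Sum.inr (s, i, j)) => e2 (e1 (e0 s) i) j

/-- The generic tree-like graph with a complete core. -/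
def coreGraph (K : Type*) (a b : ℕ) : SimpleGraph (K ⊕ (K × Fin a ⊕ K × Fin a × Fin b)) :=
  SimpleGraph.fromRel (fun x y =>
    (∃ s s' : K, x = Sum.inl s ∧ y = Sum.inl s') ∨
    (∃ (s : K) (i : Fin a), x = Sum.inl s ∧ y = Sum.inr (Sum.inl (s, i))) ∨
    (∃ (s : K) (i : Fin a) (j : Fin b),
      x = Sum.inr (Sum.inl (s, i)) ∧ y = Sum.inr (Sum.inr (s, i, j))))

theorem core_iso {V K : Type*} [Finite V] (G : SimpleGraph V) (l : V → ℕ) (p : V → V) (a b : ℕ)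
    (hl : ∀ v, l v ≤ 2) (hp : ∀ v, l v ≠ 0 → l (p v) + 1 = l v)
    (hadj : ∀ u v, G.Adj u v ↔ LevelAdj l p u v)
    (e0 : K → V) (he0 : Function.Injective e0) (he0' : ∀ v, l v = 0 ↔ ∃ s, e0 s = v)
    (ha : ∀ v, l v = 0 → Nat.card {w // l w = 1 ∧ p w = v} = a)
    (hb : ∀ v, l v = 1 → Nat.card {w // l w = 2 ∧ p w = v} = b) :
    Nonempty (G ≃g coreGraph K a b) := by
  obtain ⟨e1, h1⟩ := enum_fiber _ _ a ha
  obtain ⟨e2, h2⟩ := enum_fiber _ _ b hb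
  have l0 : ∀ s, l (e0 s) = 0 := fun s => (he0' _).mpr ⟨s, rfl⟩
  have l1 : ∀ s i, l (e1 (e0 s) i) = 1 := fun s i => ((h1 _ (l0 s)).1 i).1
  have p1 : ∀ s i, p (e1 (e0 s) i) = e0 s := fun s i => ((h1 _ (l0 s)).1 i).2
  have l2 : ∀ s i j, l (e2 (e1 (e0 s) i) j) = 2 := fun s i j => ((h2 _ (l1 s i)).1 j).1
  have p2 : ∀ s i j, p (e2 (e1 (e0 s) i) j) = e1 (e0 s) i := fun s i j => ((h2 _ (l1 s i)).1 j).2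
  have i1 : ∀ s i s' i', e1 (e0 s) i = e1 (e0 s') i' ↔ s = s' ∧ i = i' := by
    intro s i s' i'
    constructor
    · intro h
      have hs : e0 s = e0 s' := by rw [← p1 s i, ← p1 s' i', h]
      have hs' := he0 hs
      subst hs'
      exact ⟨rfl, (h1 _ (l0 s)).2.1 h⟩
    · rintro ⟨rfl, rfl⟩; rfl
  have i2 : ∀ s i j s' i' j', e2 (e1 (e0 s) i) j = e2 (e1 (e0 s') i') j' ↔
      s = s' ∧ i = i' ∧ j = j' := by
    intro s i j s' i' j'
    constructor
    · intro h
      have hs : e1 (e0 s) i = e1 (e0 s') i' := by rw [← p2 s i j, ← p2 s' i' j', h]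
      obtain ⟨rfl, rfl⟩ := (i1 _ _ _ _).mp hs
      exact ⟨rfl, rfl, (h2 _ (l1 s i)).2.1 h⟩
    · rintro ⟨rfl, rfl, rfl⟩; rfl
  have i0 : ∀ s s', e0 s = e0 s' ↔ s = s' := fun s s' => he0.eq_iff
  have hbij : Function.Bijective (enumMap e0 e1 e2) := by
    constructor
    · rintro (s | ⟨s, i⟩ | ⟨s, i, j⟩) (s' | ⟨s', i'⟩ | ⟨s', i', j'⟩) h <;>
        simp only [enumMap] at h <;>
        first
        | (have := congrArg l h; simp [l0, l1, l2] at this; done)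
        | (simp only [i0, i1, i2] at h; simp [h])
    · have hv1 : ∀ v, l v = 1 → ∃ s i, e1 (e0 s) i = v := by
        intro v hv
        have := hp v (by omega)
        obtain ⟨s, hs⟩ := (he0' (p v)).mp (by omega)
        obtain ⟨i, hi⟩ := (h1 _ (l0 s)).2.2 v ⟨hv, hs.symm⟩
        exact ⟨s, i, hi⟩
      intro v
      have := hl v
      have h3 : l v = 0 ∨ l v = 1 ∨ l v = 2 := by omega
      rcases h3 with h | h | h
      · obtain ⟨s, hs⟩ := (he0' v).mp h
        exact ⟨Sum.inl s, hs⟩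
      · obtain ⟨s, i, hs⟩ := hv1 v h
        exact ⟨Sum.inr (Sum.inl (s, i)), hs⟩
      · have := hp v (by omega)
        obtain ⟨s, i, hs⟩ := hv1 (p v) (by omega)
        obtain ⟨j, hj⟩ := (h2 _ (l1 s i)).2.2 v ⟨h, hs.symm⟩
        exact ⟨Sum.inr (Sum.inr (s, i, j)), hj⟩
  refine ⟨(RelIso.symm ⟨Equiv.ofBijective _ hbij, ?_⟩)⟩
  rintro (s | ⟨s, i⟩ | ⟨s, i, j⟩) (s' | ⟨s', i'⟩ | ⟨s', i', j'⟩) <;>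
    simp only [Equiv.ofBijective_apply, hadj, LevelAdj, coreGraph, SimpleGraph.fromRel_adj,
      enumMap, l0, l1, l2, p1, p2, i0, i1] <;> simp <;> grind

theorem core_unit (t b : ℕ) : Nonempty (coreGraph Unit t b ≃g starWithPendants t b) := by
  let e : Unit ⊕ (Unit × Fin t ⊕ Unit × Fin t × Fin b) ≃ Unit ⊕ (Fin t ⊕ Fin t × Fin b) :=
    Equiv.sumCongr (Equiv.refl _) (Equiv.sumCongr (Equiv.punitProd _) (Equiv.punitProd _))
  refine ⟨⟨e, ?_⟩⟩
  rintro (s | ⟨s, i⟩ | ⟨s, i, j⟩) (s' | ⟨s', i'⟩ | ⟨s', i', j'⟩) <;>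
    simp [e, coreGraph, starWithPendants]

theorem core_bool (a b : ℕ) : Nonempty (coreGraph Bool a b ≃g doubleStarWithPendants a b) := by
  refine ⟨⟨Equiv.refl _, ?_⟩⟩
  rintro (s | ⟨s, i⟩ | ⟨s, i, j⟩) (s' | ⟨s', i'⟩ | ⟨s', i', j'⟩) <;>
    simp [coreGraph, doubleStarWithPendants] <;> cases s <;> cases s' <;> simp

end StatusThree

namespace StatusThree

open SimpleGraph Finset

theorem nbr_sum {V : Type*} [Fintype V] (G : SimpleGraph V) (hT : G.IsTree) (v : V)
    (A : Finset V) (P : V → Prop) (x : ℕ) (hadj : ∀ u, G.Adj v u ↔ (u ∈ A ∨ P u))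
    (hdisj : ∀ u ∈ A, ¬ P u) (hx : ∀ u, P u → G.status u = x) :
    ∑ u ∈ A, ((Fintype.card V : ℤ) + G.status v - G.status u) +
      (Nat.card {u // P u} : ℤ) * ((Fintype.card V : ℤ) + G.status v - x) =
      2 * ((Fintype.card V : ℤ) - 1) := by
  classical
  rw [← sum_terms G hT v]
  have h1 : ∀ u, (if G.Adj v u then (Fintype.card V : ℤ) + G.status v - G.status u else 0) =
      (if u ∈ A then (Fintype.card V : ℤ) + G.status v - G.status u else 0) +
      (if P u then (Fintype.card V : ℤ) + G.status v - x else 0) := by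
    intro u
    have hd := hdisj u
    have hxu := hx u
    by_cases hA : u ∈ A
    · simp [hadj, hA, hd hA]
    · by_cases hP : P u
      · simp [hadj, hA, hP, hxu hP]
      · simp [hadj, hA, hP]
  have h2 : ∑ u : V, (if G.Adj v u then (Fintype.card V : ℤ) + G.status v - G.status u else 0) =
      ∑ u ∈ A, ((Fintype.card V : ℤ) + G.status v - G.status u) +
      (Nat.card {u // P u} : ℤ) * ((Fintype.card V : ℤ) + G.status v - x) := by
    rw [Finset.sum_congr rfl fun u _ => h1 u, Finset.sum_add_distrib]
    congr 1
    · simp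
    · rw [← Finset.sum_filter, Finset.sum_const, Nat.card_eq_fintype_card, Fintype.card_subtype]
      simp
  rw [← h2]

theorem three_values {V : Type*} [Fintype V] (G : SimpleGraph V) (h : G.numStatusValues = 3) :
    ∃ s0 s1 s2 : ℕ, s0 < s1 ∧ s1 < s2 ∧
      (∀ v, G.status v = s0 ∨ G.status v = s1 ∨ G.status v = s2) ∧
      (∃ v, G.status v = s0) ∧ (∃ v, G.status v = s1) ∧ (∃ v, G.status v = s2) := by
  unfold SimpleGraph.numStatusValues at h
  set e := (Finset.univ.image G.status).orderEmbOfFin h with he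
  have hr : ∀ x, x ∈ Finset.univ.image G.status ↔ ∃ i, e i = x := by
    intro x
    have := Finset.range_orderEmbOfFin (Finset.univ.image G.status) h
    rw [← Finset.mem_coe, ← this]
    rfl
  have hex : ∀ i, ∃ v, G.status v = e i := by
    intro i
    have := (hr (e i)).mpr ⟨i, rfl⟩
    simpa using this
  refine ⟨e 0, e 1, e 2, by simp, by simp, ?_, hex 0, hex 1, hex 2⟩
  intro v
  obtain ⟨i, hi⟩ := (hr (G.status v)).mp (by simp)
  rw [← hi]
  fin_cases i <;> simp

set_option maxHeartbeats 1000000 in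
theorem forward {V : Type*} [Fintype V] (G : SimpleGraph V) (hT : G.IsTree)
    (hk : G.numStatusValues = 3) :
    (∃ t b : ℕ, 2 ≤ t ∧ 1 ≤ b ∧ Nonempty (G ≃g coreGraph Unit t b)) ∨
    (∃ a b : ℕ, 1 ≤ a ∧ 1 ≤ b ∧ Nonempty (G ≃g coreGraph Bool a b)) := by
  classical
  have hn : 3 ≤ Fintype.card V := by
    rw [← hk]
    exact Finset.card_image_le
  obtain ⟨s0, s1, s2, h01, h12, hval, ⟨c, hc⟩, ⟨v1, hv1⟩, ⟨v2, hv2⟩⟩ := three_values G hk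
  set n := Fintype.card V with hndef
  have hmin : ∀ v, G.status c ≤ G.status v := by
    intro v
    have := hval v
    omega
  have low : ∀ v, ∃ u, G.status v ≠ s0 → G.Adj v u ∧ G.status u < G.status v := by
    intro v
    by_cases hv : G.status v = s0
    · exact ⟨v, fun h => absurd hv h⟩
    · have hvc : v ≠ c := by rintro rfl; exact hv hc
      obtain ⟨u, hu, -, -, h⟩ := exists_lower G hT hmin _ v hvc rfl
      refine ⟨u, fun _ => ⟨hu, ?_⟩⟩
      rcases h with rfl | h
      · have := hval v
        omega
      · exact h
  choose p hp using low
  have huniq : ∀ v u w, G.Adj v u → G.Adj v w → G.status u ≤ G.status v →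
      G.status w ≤ G.status v → u = w := by
    intro v u w hu hw h1 h2
    by_contra hne
    have := convex G hT hu hw hne
    omega
  have hpar : ∀ v u, G.status v ≠ s0 → G.Adj v u → G.status u ≤ G.status v → u = p v := by
    intro v u hv hu h
    exact huniq v u (p v) hu (hp v hv).1 h (hp v hv).2.le
  have core : ∀ v, v ≠ c → G.status v = s0 → G.Adj c v := by
    intro v hv hs
    obtain ⟨u, hu, -, -, h⟩ := exists_lower G hT hmin _ v hv rfl
    rcases h with rfl | h
    · exact hu.symm
    · have := hval u
      omega
  -- leaves
  have e2 : ∀ v, G.status v = s2 → (s2 : ℤ) = G.status (p v) + n - 2 := by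
    intro v hv
    have hpv := hp v (by omega)
    have := nbr_sum G hT v {p v} (fun _ => False) 0
      (by
        intro u
        constructor
        · intro hu
          have := hval u
          left
          rw [Finset.mem_singleton]
          exact hpar v u (by omega) hu (by omega)
        · rintro (h | h)
          · rw [Finset.mem_singleton] at h
            rw [h]
            exact hpv.1
          · exact h.elim)
      (by simp) (by simp)
    simp at this
    omega
  have e1 : ∀ v, G.status v = s1 → ((n : ℤ) + s1 - s0) +
      (Nat.card {w // G.status w = s2 ∧ p w = v} : ℤ) * (n + s1 - s2) = 2 * (n - 1) := by
    intro v hv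
    have hpv := hp v (by omega)
    have hpv0 : G.status (p v) = s0 := by
      have := hval (p v)
      omega
    have := nbr_sum G hT v {p v} (fun w => G.status w = s2 ∧ p w = v) s2
      (by
        intro u
        rw [Finset.mem_singleton]
        constructor
        · intro hu
          have := hval u
          by_cases hu2 : G.status u = s2
          · right
            exact ⟨hu2, (hpar u v (by omega) hu.symm (by omega)).symm⟩
          · left
            exact hpar v u (by omega) hu (by omega)
        · rintro (h | ⟨h, h'⟩)
          · rw [h]
            exact hpv.1
          · have := hp u (by omega)
            rw [h'] at this
            exact this.1.symm)
      (by
        intro u hu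
        rw [Finset.mem_singleton] at hu
        rw [hu]
        omega) (fun u hu => hu.1)
    rw [Finset.sum_singleton, hv, hpv0] at this
    exact this
  have p2 : ∀ w, G.status w = s2 → G.status (p w) = s1 := by
    intro w hw
    have h2 := e2 w hw
    have h1 := e1 v1 hv1
    have hw' := hp w (by omega)
    rcases hval (p w) with h | h | h
    · exfalso
      rcases Nat.eq_zero_or_pos (Nat.card {w // G.status w = s2 ∧ p w = v1}) with h0 | h0
      · rw [h0] at h1
        push_cast at h1
        omega
      · obtain ⟨⟨x, hx, hx'⟩⟩ := (Nat.card_pos_iff.mp h0).1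
        have h3 := e2 x hx
        rw [hx'] at h3
        omega
    · exact h
    · omega
  have hs2 : (s2 : ℤ) = s1 + n - 2 := by
    have := e2 v2 hv2
    rw [p2 v2 hv2] at this
    exact this
  have e1' : ∀ v, G.status v = s1 → (n : ℤ) + s0 - s1 =
      2 + 2 * (Nat.card {w // G.status w = s2 ∧ p w = v} : ℤ) := by
    intro v hv
    have := e1 v hv
    rw [hs2] at this
    linarith
  obtain ⟨b, hb⟩ : ∃ b, b = Nat.card {w // G.status w = s2 ∧ p w = p v2} := ⟨_, rfl⟩
  have hb1 : 1 ≤ b := by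
    rw [hb]
    have : Nonempty {w // G.status w = s2 ∧ p w = p v2} := ⟨⟨v2, hv2, rfl⟩⟩
    exact Nat.card_pos
  have hbn : (n : ℤ) + s0 - s1 = 2 + 2 * b := by
    rw [hb]
    exact e1' _ (p2 v2 hv2)
  have hbc : ∀ v, G.status v = s1 → Nat.card {w // G.status w = s2 ∧ p w = v} = b := by
    intro v hv
    have := e1' v hv
    omega
  have p1 : ∀ w, G.status w = s1 → G.status (p w) = s0 := by
    intro w hw
    have h1 := hp w (by omega)
    have h2 := hval (p w)
    omega
  have coreadj : ∀ u v, u ≠ v → G.status u = s0 → G.status v = s0 → G.Adj u v := by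
    intro u v huv hu hv
    by_cases huc : u = c
    · subst huc
      exact core v huv.symm hv
    · by_cases hvc : v = c
      · subst hvc
        exact (core u huv hu).symm
      · exfalso
        have := convex G hT (core u huc hu) (core v hvc hv) huv
        omega
  have adj0 : ∀ d u, G.status d = s0 → (G.Adj d u ↔ ((G.status u = s0 ∧ u ≠ d) ∨
      (G.status u = s1 ∧ p u = d))) := by
    intro d u hd
    constructor
    · intro h
      rcases hval u with hu | hu | hu
      · exact Or.inl ⟨hu, h.ne'⟩
      · exact Or.inr ⟨hu, (hpar u d (by omega) h.symm (by omega)).symm⟩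
      · exfalso
        have h1 := hpar u d (by omega) h.symm (by omega)
        have h2 := p2 u hu
        rw [← h1] at h2
        omega
    · rintro (⟨h, h'⟩ | ⟨h, h'⟩)
      · exact coreadj d u h'.symm hd h
      · have := hp u (by omega)
        rw [h'] at this
        exact this.1.symm
  -- level function
  obtain ⟨l, hl⟩ : ∃ l : V → ℕ, l = fun v => if G.status v = s0 then 0 else
      if G.status v = s1 then 1 else 2 := ⟨_, rfl⟩
  have l0 : ∀ v, l v = 0 ↔ G.status v = s0 := by
    intro v
    simp only [hl]
    split_ifs <;> simp <;> omega
  have l1 : ∀ v, l v = 1 ↔ G.status v = s1 := by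
    intro v
    simp only [hl]
    split_ifs <;> simp <;> omega
  have l2 : ∀ v, l v = 2 ↔ G.status v = s2 := by
    intro v
    have := hval v
    simp only [hl]
    split_ifs <;> simp <;> omega
  have hl2 : ∀ v, l v ≤ 2 := by
    intro v
    simp only [hl]
    split_ifs <;> simp
  have hlp : ∀ v, l v ≠ 0 → l (p v) + 1 = l v := by
    intro v hv
    rcases hval v with h | h | h
    · exact absurd ((l0 v).mpr h) hv
    · rw [(l1 v).mpr h, (l0 _).mpr (p1 v h)]
    · rw [(l2 v).mpr h, (l1 _).mpr (p2 v h)]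
  have hladj : ∀ u v, G.Adj u v ↔ LevelAdj l p u v := by
    intro u v
    constructor
    · intro h
      rcases hval u with hu | hu | hu
      · rcases (adj0 u v hu).mp h with ⟨h1, h2⟩ | ⟨h1, h2⟩
        · exact Or.inl ⟨(l0 u).mpr hu, (l0 v).mpr h1, h2.symm⟩
        · exact Or.inr (Or.inl ⟨by rw [(l0 u).mpr hu, (l1 v).mpr h1], h2⟩)
      · rcases Nat.lt_or_ge (G.status u) (G.status v) with h1 | h1
        · have h3 : G.status v = s2 := by
            have := hval v
            omega
          have h2 := hpar v u (by omega) h.symm (by omega)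
          exact Or.inr (Or.inl ⟨by rw [(l1 u).mpr hu, (l2 v).mpr h3], h2.symm⟩)
        · have h2 := hpar u v (by omega) h (by omega)
          refine Or.inr (Or.inr ⟨?_, h2.symm⟩)
          rw [h2]
          exact (hlp u (by rw [(l1 u).mpr hu]; omega)).symm
      · have h1 := hval v
        have h2 := hpar u v (by omega) h (by omega)
        refine Or.inr (Or.inr ⟨?_, h2.symm⟩)
        rw [h2]
        exact (hlp u (by rw [(l2 u).mpr hu]; omega)).symm
    · rintro (⟨h1, h2, h3⟩ | ⟨h1, h2⟩ | ⟨h1, h2⟩)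
      · exact coreadj u v h3 ((l0 u).mp h1) ((l0 v).mp h2)
      · have := hp v (fun h => by have := (l0 v).mpr h; omega)
        rw [h2] at this
        exact this.1.symm
      · have := hp u (fun h => by have := (l0 u).mpr h; omega)
        rw [h2] at this
        exact this.1
  have hbl : ∀ v, l v = 1 → Nat.card {w // l w = 2 ∧ p w = v} = b := by
    intro v hv
    simp only [l2]
    exact hbc v ((l1 v).mp hv)
  by_cases hC : ∃ d, d ≠ c ∧ G.status d = s0
  · right
    obtain ⟨d, hdc, hd⟩ := hC
    have hall : ∀ v, G.status v = s0 ↔ v = c ∨ v = d := by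
      intro v
      constructor
      · intro hv
        by_contra hne
        push Not at hne
        have := convex G hT (coreadj c d hdc.symm hc hd) (coreadj c v hne.1.symm hc hv)
          hne.2.symm
        omega
      · rintro (rfl | rfl) <;> assumption
    have ctr : ∀ x y, x ≠ y → G.status x = s0 → G.status y = s0 →
        (∀ v, G.status v = s0 → v = x ∨ v = y) →
        (n : ℤ) + (Nat.card {w // G.status w = s1 ∧ p w = x} : ℤ) * (2 + 2 * b) =
          2 * (n - 1) := by
      intro x y hxy hx hy hxy'
      have := nbr_sum G hT x {y} (fun w => G.status w = s1 ∧ p w = x) s1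
        (by
          intro u
          rw [adj0 x u hx, Finset.mem_singleton]
          constructor
          · rintro (⟨h, h'⟩ | h)
            · exact Or.inl ((hxy' u h).resolve_left h')
            · exact Or.inr h
          · rintro (h | h)
            · exact Or.inl ⟨by rw [h]; exact hy, by rw [h]; exact hxy.symm⟩
            · exact Or.inr h)
        (by
          intro u hu
          rw [Finset.mem_singleton] at hu
          rw [hu]
          omega) (fun u hu => hu.1)
      rw [Finset.sum_singleton, hx, hy, ← hndef, hbn] at this
      linarith
    have k1 := ctr c d hdc.symm hc hd (fun v hv => (hall v).mp hv)
    have k2 := ctr d c hdc hd hc (fun v hv => ((hall v).mp hv).symm)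
    obtain ⟨a, ha⟩ : ∃ a, a = Nat.card {w // G.status w = s1 ∧ p w = c} := ⟨_, rfl⟩
    rw [← ha] at k1
    have ha' : Nat.card {w // G.status w = s1 ∧ p w = d} = a := by
      have h1 : (Nat.card {w // G.status w = s1 ∧ p w = d} : ℤ) * (2 + 2 * b) =
          (a : ℤ) * (2 + 2 * b) := by linarith
      have h2 := mul_right_cancel₀ (by omega) h1
      exact_mod_cast h2
    refine ⟨a, b, ?_, hb1, ?_⟩
    · by_contra h
      have : a = 0 := by omega
      rw [this] at k1
      push_cast at k1
      omega
    · refine core_iso G l p a b hl2 hlp hladj (fun s => if s then d else c) ?_ ?_ ?_ hbl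
      · intro s s' h
        cases s <;> cases s' <;> simp [hdc, hdc.symm] at h ⊢
      · intro v
        rw [l0, hall]
        simp [eq_comm]
      · intro v hv
        simp only [l1]
        rcases (hall v).mp ((l0 v).mp hv) with h | h
        · rw [h]; exact ha.symm
        · rw [h]; exact ha'
  · left
    push Not at hC
    have hall : ∀ v, G.status v = s0 ↔ v = c := by
      intro v
      constructor
      · intro hv
        by_contra hne
        exact hC v hne hv
      · rintro rfl; exact hc
    have ctr := nbr_sum G hT c ∅ (fun w => G.status w = s1 ∧ p w = c) s1
      (by
        intro u
        rw [adj0 c u hc, hall]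
        simp)
      (by simp) (fun u hu => hu.1)
    obtain ⟨t, ht⟩ : ∃ t, t = Nat.card {w // G.status w = s1 ∧ p w = c} := ⟨_, rfl⟩
    rw [← ht, Finset.sum_empty, hc, ← hndef] at ctr
    refine ⟨t, b, ?_, hb1, ?_⟩
    · by_contra h
      have : t = 0 ∨ t = 1 := by omega
      rcases this with h | h <;> rw [h] at ctr <;> push_cast at ctr <;> omega
    · refine core_iso G l p t b hl2 hlp hladj (fun _ => c) ?_ ?_ ?_ hbl
      · intro s s' _
        rfl
      · intro v
        rw [l0, hall]
        simp [eq_comm]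
      · intro v hv
        simp only [l1]
        rw [(hall v).mp ((l0 v).mp hv)]
        exact ht.symm

end StatusThree

namespace StatusThree

open SimpleGraph Finset

theorem dist_iso_le {V W : Type*} {G : SimpleGraph V} {H : SimpleGraph W} (hG : G.Connected)
    (f : G ≃g H) (u v : V) : H.dist (f u) (f v) ≤ G.dist u v := by
  obtain ⟨q, hq⟩ := hG.exists_walk_length_eq_dist u v
  have := H.dist_le (q.map f.toHom)
  rw [Walk.length_map, hq] at this
  exact this

theorem numStatus_iso {V W : Type*} [Fintype V] [Fintype W] {G : SimpleGraph V}
    {H : SimpleGraph W} (hG : G.Connected) (f : G ≃g H) :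
    G.numStatusValues = H.numStatusValues := by
  have hH : H.Connected := f.connected_iff.mp hG
  have hd : ∀ u v, H.dist (f u) (f v) = G.dist u v := by
    intro u v
    apply le_antisymm (dist_iso_le hG f u v)
    have := dist_iso_le hH f.symm (f u) (f v)
    simpa using this
  have hs : ∀ v, H.status (f v) = G.status v := by
    intro v
    unfold SimpleGraph.status
    rw [← Equiv.sum_comp f.toEquiv]
    exact Finset.sum_congr rfl fun u _ => hd v u
  unfold SimpleGraph.numStatusValues
  congr 1
  ext x
  simp only [Finset.mem_image, Finset.mem_univ, true_and]
  constructor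
  · rintro ⟨v, hv⟩
    exact ⟨f v, by rw [hs, hv]⟩
  · rintro ⟨w, hw⟩
    exact ⟨f.symm w, by rw [← hs]; simpa using hw⟩

section
variable {K : Type*} [Fintype K] {a b : ℕ}

theorem core_pend (hT : (coreGraph K a b).IsTree) (s : K) (i : Fin a) (j : Fin b) :
    ((coreGraph K a b).status (Sum.inr (Sum.inr (s, i, j))) : ℤ) =
      (coreGraph K a b).status (Sum.inr (Sum.inl (s, i))) +
        Fintype.card (K ⊕ (K × Fin a ⊕ K × Fin a × Fin b)) - 2 := by
  classical
  have := nbr_sum _ hT (Sum.inr (Sum.inr (s, i, j))) {Sum.inr (Sum.inl (s, i))}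
    (fun _ => False) 0
    (by
      rintro (s' | ⟨s', i'⟩ | ⟨s', i', j'⟩) <;> simp [coreGraph] <;> grind)
    (by simp) (by simp)
  rw [Finset.sum_singleton] at this
  simp only [Nat.card_of_isEmpty, Nat.cast_zero, zero_mul, add_zero] at this
  linarith

theorem core_mid (hT : (coreGraph K a b).IsTree) (s : K) (i : Fin a) (hb : 1 ≤ b) :
    ((coreGraph K a b).status (Sum.inr (Sum.inl (s, i))) : ℤ) =
      (coreGraph K a b).status (Sum.inl s) +
        Fintype.card (K ⊕ (K × Fin a ⊕ K × Fin a × Fin b)) - 2 - 2 * b := by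
  classical
  have hp := core_pend hT s i
  have hcard : Nat.card {u : K ⊕ (K × Fin a ⊕ K × Fin a × Fin b) //
      ∃ j, u = Sum.inr (Sum.inr (s, i, j))} = b := by
    have e : Fin b ≃ {u : K ⊕ (K × Fin a ⊕ K × Fin a × Fin b) //
        ∃ j, u = Sum.inr (Sum.inr (s, i, j))} :=
      Equiv.ofBijective (fun j => ⟨Sum.inr (Sum.inr (s, i, j)), j, rfl⟩)
        ⟨fun j j' h => by simpa using h, by rintro ⟨_, j, rfl⟩; exact ⟨j, rfl⟩⟩
    rw [← Nat.card_congr e, Nat.card_fin]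
  have := nbr_sum _ hT (Sum.inr (Sum.inl (s, i))) {Sum.inl s}
    (fun u => ∃ j, u = Sum.inr (Sum.inr (s, i, j)))
    ((coreGraph K a b).status (Sum.inr (Sum.inr (s, i, ⟨0, hb⟩))))
    (by
      rintro (s' | ⟨s', i'⟩ | ⟨s', i', j'⟩) <;> simp [coreGraph] <;> grind)
    (by simp)
    (by
      rintro _ ⟨j, rfl⟩
      have h1 := hp j
      have h2 := hp ⟨0, hb⟩
      omega)
  rw [Finset.sum_singleton, hcard, hp] at this
  linarith

theorem card_children (s : K) : Nat.card {u : K ⊕ (K × Fin a ⊕ K × Fin a × Fin b) //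
      ∃ i, u = Sum.inr (Sum.inl (s, i))} = a := by
  have e : Fin a ≃ {u : K ⊕ (K × Fin a ⊕ K × Fin a × Fin b) //
      ∃ i, u = Sum.inr (Sum.inl (s, i))} :=
    Equiv.ofBijective (fun i => ⟨Sum.inr (Sum.inl (s, i)), i, rfl⟩)
      ⟨fun j j' h => by simpa using h, by rintro ⟨_, j, rfl⟩; exact ⟨j, rfl⟩⟩
  rw [← Nat.card_congr e, Nat.card_fin]

theorem core_three (hT : (coreGraph K a b).IsTree) (s0 : K) (ha : 1 ≤ a) (hb : 1 ≤ b)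
    (hn : 2 + 2 * b < Fintype.card (K ⊕ (K × Fin a ⊕ K × Fin a × Fin b)))
    (heq : ∀ s, (coreGraph K a b).status (Sum.inl s) = (coreGraph K a b).status (Sum.inl s0)) :
    (coreGraph K a b).numStatusValues = 3 := by
  set n := Fintype.card (K ⊕ (K × Fin a ⊕ K × Fin a × Fin b)) with hndef
  set x := (coreGraph K a b).status (Sum.inl s0) with hx
  have h1 : ∀ s i, (coreGraph K a b).status (Sum.inr (Sum.inl (s, i))) =
      x + n - 2 - 2 * b := by
    intro s i
    have := core_mid hT s i hb
    rw [heq s] at this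
    omega
  have h2 : ∀ s i j, (coreGraph K a b).status (Sum.inr (Sum.inr (s, i, j))) =
      x + n - 2 - 2 * b + n - 2 := by
    intro s i j
    have := core_pend hT s i j
    rw [h1 s i] at this
    omega
  unfold SimpleGraph.numStatusValues
  rw [Finset.card_eq_three]
  refine ⟨x, x + n - 2 - 2 * b, x + n - 2 - 2 * b + n - 2, by omega, by omega, by omega, ?_⟩
  ext y
  simp only [Finset.mem_image, Finset.mem_univ, true_and, Finset.mem_insert,
    Finset.mem_singleton]
  constructor
  · rintro ⟨(s | ⟨s, i⟩ | ⟨s, i, j⟩), rfl⟩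
    · exact Or.inl (heq s)
    · exact Or.inr (Or.inl (h1 s i))
    · exact Or.inr (Or.inr (h2 s i j))
  · rintro (rfl | rfl | rfl)
    · exact ⟨_, hx.symm⟩
    · exact ⟨_, h1 s0 ⟨0, ha⟩⟩
    · exact ⟨_, h2 s0 ⟨0, ha⟩ ⟨0, hb⟩⟩

end

theorem back_unit {t b : ℕ} (hT : (coreGraph Unit t b).IsTree) (ht : 2 ≤ t) (hb : 1 ≤ b) :
    (coreGraph Unit t b).numStatusValues = 3 := by
  refine core_three hT () (by omega) hb ?_ (fun _ => rfl)
  simp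
  nlinarith

theorem back_bool {a b : ℕ} (hT : (coreGraph Bool a b).IsTree) (ha : 1 ≤ a) (hb : 1 ≤ b) :
    (coreGraph Bool a b).numStatusValues = 3 := by
  have hcard : Fintype.card (Bool ⊕ (Bool × Fin a ⊕ Bool × Fin a × Fin b)) =
      2 + (2 * a + 2 * (a * b)) := by simp
  refine core_three hT false ha hb ?_ ?_
  · rw [hcard]
    nlinarith
  · have h0 : (coreGraph Bool a b).status (Sum.inl true) =
        (coreGraph Bool a b).status (Sum.inl false) := by
      have hm := core_mid hT false
      have := nbr_sum _ hT (Sum.inl false) {Sum.inl true}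
        (fun u => ∃ i, u = Sum.inr (Sum.inl (false, i)))
        ((coreGraph Bool a b).status (Sum.inr (Sum.inl (false, ⟨0, ha⟩))))
        (by
          rintro (s' | ⟨s', i'⟩ | ⟨s', i', j'⟩) <;> simp [coreGraph] <;> grind)
        (by simp)
        (by
          rintro _ ⟨j, rfl⟩
          have h1 := hm j hb
          have h2 := hm ⟨0, ha⟩ hb
          omega)
      rw [Finset.sum_singleton, card_children, hm _ hb, hcard] at this
      push_cast at this
      have h3 : ((coreGraph Bool a b).status (Sum.inl true) : ℤ) =
        (coreGraph Bool a b).status (Sum.inl false) := by linarith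
      exact_mod_cast h3
    intro s
    cases s
    · rfl
    · exact h0

end StatusThree

/-- A finite tree `T` has exactly three distinct status values if and only if `T` belongs to
the family `𝒯`, i.e. `T` is obtained by appending `b ≥ 1` pendant vertices to each leaf of a
star `K_{1,t}` with `t ≥ 2` leaves, or to each leaf of a balanced double star (with `a ≥ 1`
leaves on each center). -/
theorem numStatusValues_eq_three_iff {V : Type*} [Fintype V]
    (G : SimpleGraph V) (hT : G.IsTree) :
    G.numStatusValues = 3 ↔
      ((∃ t b : ℕ, 2 ≤ t ∧ 1 ≤ b ∧ Nonempty (G ≃g starWithPendants t b)) ∨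
       (∃ a b : ℕ, 1 ≤ a ∧ 1 ≤ b ∧ Nonempty (G ≃g doubleStarWithPendants a b))) := by
  constructor
  · intro h
    rcases StatusThree.forward G hT h with ⟨t, b, ht, hb, ⟨f⟩⟩ | ⟨a, b, ha, hb, ⟨f⟩⟩
    · obtain ⟨g⟩ := StatusThree.core_unit t b
      exact Or.inl ⟨t, b, ht, hb, ⟨f.trans g⟩⟩
    · obtain ⟨g⟩ := StatusThree.core_bool a b
      exact Or.inr ⟨a, b, ha, hb, ⟨f.trans g⟩⟩
  · rintro (⟨t, b, ht, hb, ⟨f⟩⟩ | ⟨a, b, ha, hb, ⟨f⟩⟩)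
    · obtain ⟨g⟩ := StatusThree.core_unit t b
      have e := f.trans g.symm
      rw [StatusThree.numStatus_iso hT.connected e]
      exact StatusThree.back_unit ((SimpleGraph.Iso.isTree_iff e).mp hT) ht hb
    · obtain ⟨g⟩ := StatusThree.core_bool a b
      have e := f.trans g.symm
      rw [StatusThree.numStatus_iso hT.connected e]
      exact StatusThree.back_bool ((SimpleGraph.Iso.isTree_iff e).mp hT) ha hb
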